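/- Let p be a prime and m, n positive integers with d = gcd(m, n) such that n/d is even. Set q = p^{mn/d}, α = (q−1)/(p^n−1), β = (q−1)/(p^m+1). Then the number of pairs (i, j) of natural numbers with 0 ≤ iα ≤ jβ ≤ q−1 and C(jβ, iα) ≢ 0 (mod p) equals (Σ_{i=0}^{p−1} ((p−i)(i+1))^{n/(2d)} + Σ_{1 ≤ j ≤ i ≤ p−1} ((j+1)^{m/d} − 2j^{m/d} + (j−1)^{m/d})((p−i)(i−j+1))^{n/(2d)})^d + p^n + 1. -/

import Mathlib

/-!
In base `p`, the multiples `i * α` with `i < p ^ n` are exactly the numbers below `q` whose digit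
sequence has period `n`, while for `c < p ^ m` the digits of `(c + 1) * β` repeat with period
`2 * m`: `m` digits complementary to those of `c`, then the digits of `c`. By Lucas' theorem the
pairs with `0 < j ≤ p ^ m` correspond to pairs `(a, c)` of digit tuples such that the sequence of
`a` is dominated by that of `c` at all positions. The remaining two values are `j = 0`, which admits
only `i = 0`, and `j = p ^ m + 1`, which admits all `p ^ n` values of `i` because every digit of
`q - 1` is `p - 1`.

Positions in different residue classes modulo `d` do not interact, which produces the `d`-th power
and reduces to coprime periods `N = n / d` and `M = m / d`. As `N` is even, `M` is odd, so after
complementing the entries of `c` at odd indices the sequence attached to `c` shows the complement at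
even positions and `c` itself at odd ones. By the Chinese remainder theorem every entry of `a` meets
every entry of `c`: it is bounded by `p - 1 - max c` at even and by `min c` at odd indices. It
remains to count the tuples `c` with given maximum and minimum, by inclusion-exclusion.
-/

section

open Finset

/-- The digit of `x` in base `b` at position `t`, the units digit being at position `0`. -/
def baseDigit (b x t : ℕ) : ℕ := x / b ^ t % b

theorem baseDigit_lt {b : ℕ} (hb : 0 < b) (x t : ℕ) : baseDigit b x t < b :=
  Nat.mod_lt _ hb

theorem baseDigit_baseDigit_pow {m r : ℕ} (hr : r < m) (b x k : ℕ) :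
    baseDigit b (baseDigit (b ^ m) x k) r = baseDigit b x (m * k + r) := by
  obtain ⟨s, rfl⟩ := Nat.exists_eq_add_of_lt hr
  simp only [baseDigit, ← pow_mul, pow_add b ((r + s + 1) * k) r, ← Nat.div_div_eq_div_mul]
  rw [add_assoc, pow_add, Nat.mod_mul_right_div_self, pow_succ', Nat.mod_mul_right_mod]

theorem baseDigit_finFunctionFinEquiv {b n : ℕ} (a : Fin n → Fin b) (r : Fin n) :
    baseDigit b (finFunctionFinEquiv a) r = a r :=
  congrArg (fun f ↦ (f r : ℕ)) (finFunctionFinEquiv.symm_apply_apply a)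

/-- The number with `K` digits, all equal to `1`, in base `b`. -/
def repunit (b K : ℕ) : ℕ := ∑ k ∈ range K, b ^ k

theorem sub_one_mul_repunit {b : ℕ} (hb : 1 ≤ b) (K : ℕ) :
    (b - 1) * repunit b K = b ^ K - 1 := by
  rw [repunit]
  zify [hb, Nat.one_le_pow K b hb]
  exact mul_geom_sum _ _

theorem baseDigit_mul_repunit {b x K k : ℕ} (hx : x < b) (hk : k < K) :
    baseDigit b (x * repunit b K) k = x := by
  simpa [repunit, finFunctionFinEquiv_apply, Fin.sum_univ_eq_sum_range (fun i ↦ x * b ^ i),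
    mul_sum] using baseDigit_finFunctionFinEquiv (fun _ : Fin K ↦ (⟨x, hx⟩ : Fin b)) ⟨k, hk⟩

theorem baseDigit_mul_repunit_pow {b n K x t : ℕ} (hx : x < b ^ n) (ht : t < n * K) :
    baseDigit b (x * repunit (b ^ n) K) t = baseDigit b x (t % n) := by
  have hn : 0 < n := Nat.pos_of_ne_zero (by rintro rfl; simp at ht)
  conv_lhs => rw [← Nat.div_add_mod t n]
  rw [← baseDigit_baseDigit_pow (Nat.mod_lt t hn),
    baseDigit_mul_repunit hx (Nat.div_lt_of_lt_mul ht)]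

theorem baseDigit_pow_sub_succ {b m c r : ℕ} (hc : c < b ^ m) (hr : r < m) :
    baseDigit b (b ^ m - (c + 1)) r = b - (baseDigit b c r + 1) := by
  obtain ⟨s, rfl⟩ := Nat.exists_eq_add_of_lt hr
  rw [add_assoc, pow_add] at hc ⊢
  rw [baseDigit, Nat.mul_sub_div _ _ _ hc, pow_succ',
    Nat.mul_sub_mod (Nat.div_lt_of_lt_mul (pow_succ' b s ▸ hc)), baseDigit]

theorem baseDigit_succ_mul_pow_sub_one {b m c s : ℕ} (hc : c < b ^ m) (hs : s < m * 2) :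
    baseDigit b ((c + 1) * (b ^ m - 1)) s =
      if Even (s / m) then b - (baseDigit b c (s % m) + 1) else baseDigit b c (s % m) := by
  have hm : 0 < m := by omega
  have two_blocks : (c + 1) * (b ^ m - 1) = (b ^ m - (c + 1)) + c * b ^ m := by
    zify [Nat.succ_le_of_lt hc, show 1 ≤ b ^ m by omega]
    ring
  have hblock : baseDigit (b ^ m) ((c + 1) * (b ^ m - 1)) (s / m) =
      if Even (s / m) then b ^ m - (c + 1) else c := by
    have : s / m < 2 := Nat.div_lt_of_lt_mul hs
    rw [two_blocks]
    interval_cases s / m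
    · simp [baseDigit, Nat.mod_eq_of_lt (show b ^ m - (c + 1) < b ^ m by omega)]
    · simp [baseDigit, Nat.add_mul_div_right _ _ (show 0 < b ^ m by omega),
        Nat.div_eq_of_lt (show b ^ m - (c + 1) < b ^ m by omega), Nat.mod_eq_of_lt hc]
  conv_lhs => rw [← Nat.div_add_mod s m]
  rw [← baseDigit_baseDigit_pow (Nat.mod_lt s hm), hblock]
  split_ifs
  · exact baseDigit_pow_sub_succ hc (Nat.mod_lt s hm)
  · rfl

/-- The number whose `2 * h` digits in base `b` alternate between `b - 1` and `0`, starting from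
`b - 1` in the units place. -/
def altRepunit (b h : ℕ) : ℕ := (b - 1) * repunit (b ^ 2) h

theorem add_one_mul_altRepunit {b : ℕ} (hb : 1 ≤ b) (h : ℕ) :
    (b + 1) * altRepunit b h = b ^ (2 * h) - 1 := by
  rw [altRepunit, ← mul_assoc, ← Nat.sq_sub_sq b 1, one_pow,
    sub_one_mul_repunit (Nat.one_le_pow 2 b hb), pow_mul]

theorem baseDigit_succ_mul_altRepunit {b m h c t : ℕ} (hc : c < b ^ m) (ht : t < m * (2 * h)) :
    baseDigit b ((c + 1) * altRepunit (b ^ m) h) t =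
      if Even (t / m) then b - (baseDigit b c (t % m) + 1) else baseDigit b c (t % m) := by
  have hm : 0 < m := Nat.pos_of_ne_zero (by rintro rfl; simp at ht)
  have two_blocks_lt : (c + 1) * (b ^ m - 1) < b ^ (m * 2) := by
    rw [pow_mul, sq]
    exact Nat.mul_lt_mul_of_le_of_lt hc (by omega) (by omega)
  rw [altRepunit, ← mul_assoc, ← pow_mul b m 2,
    baseDigit_mul_repunit_pow two_blocks_lt (by rwa [mul_assoc]),
    baseDigit_succ_mul_pow_sub_one hc (Nat.mod_lt _ (by positivity)),
    Nat.mod_mul_right_div_self, Nat.mod_mul_right_mod]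
  simp only [Nat.even_iff, Nat.mod_mod]

theorem not_dvd_choose_iff_le_of_lt {p a b : ℕ} (hp : p.Prime) (ha : a < p) :
    ¬ p ∣ a.choose b ↔ b ≤ a := by
  refine ⟨fun h ↦ ?_, fun hb hdvd ↦ ?_⟩
  · by_contra! hab
    exact h (by simp [Nat.choose_eq_zero_of_lt hab])
  · have : p ∣ a.factorial := by
      rw [← Nat.choose_mul_factorial_mul_factorial hb, mul_assoc]
      exact hdvd.mul_right _
    exact ha.not_ge (hp.dvd_factorial.1 this)

theorem not_dvd_choose_iff_baseDigit_le {p x y L : ℕ} (hp : p.Prime) (hx : x < p ^ L)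
    (hy : y < p ^ L) :
    ¬ p ∣ x.choose y ↔ ∀ t < L, baseDigit p y t ≤ baseDigit p x t := by
  have : Fact p.Prime := ⟨hp⟩
  rw [(Choose.choose_modEq_prod_range_choose_nat hx hy).dvd_iff dvd_rfl,
    hp.prime.dvd_finsetProd_iff]
  push Not
  simp only [mem_range]
  exact forall₂_congr fun t _ ↦ not_dvd_choose_iff_le_of_lt hp (baseDigit_lt hp.pos x t)

theorem not_dvd_choose_pow_sub_one {p L y : ℕ} (hp : p.Prime) (hy : y < p ^ L) :
    ¬ p ∣ (p ^ L - 1).choose y := by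
  rw [not_dvd_choose_iff_baseDigit_le hp (by omega) hy]
  intro t ht
  have := baseDigit_lt hp.pos y t
  rw [baseDigit_pow_sub_succ (c := 0) (by omega) ht]
  have : baseDigit p 0 t = 0 := by simp [baseDigit]
  omega

section Domination

variable {p m n : ℕ}

/-- The sequence that runs through the complements `p - 1 - c l` of the entries of `c`, then through
the entries themselves, and so on with period `2 * m`. For digits `c` of a number `x`, this is the
digit sequence of `(x + 1) * altRepunit (p ^ m) h`. -/
def antiperiodicExtension [NeZero m] (c : Fin m → Fin p) (t : ℕ) : Fin p :=
  if Even (t / m) then (c (Fin.ofNat m t)).rev else c (Fin.ofNat m t)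

theorem antiperiodicExtension_mod [NeZero m] (c : Fin m → Fin p) (h t : ℕ) :
    antiperiodicExtension c (t % (m * (2 * h))) = antiperiodicExtension c t := by
  have index_eq : Fin.ofNat m (t % (m * (2 * h))) = Fin.ofNat m t :=
    Fin.ext (Nat.mod_mul_right_mod t m (2 * h))
  rw [antiperiodicExtension, antiperiodicExtension, index_eq, Nat.mod_mul_right_div_self]
  simp only [Nat.even_iff, Nat.mod_mul_right_mod]

/-- The `n`-periodic extension of `a` is pointwise at most the antiperiodic extension of `c`. In
terms of digits, this is the condition of Lucas' theorem for a binomial coefficient not to vanish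
modulo `p`. -/
def PeriodicLE [NeZero n] [NeZero m] (a : Fin n → Fin p) (c : Fin m → Fin p) : Prop :=
  ∀ t, a (Fin.ofNat n t) ≤ antiperiodicExtension c t

theorem periodicLE_iff_forall_lt [NeZero n] [NeZero m] {h : ℕ} [NeZero h] (hn : n ∣ m * (2 * h))
    (a : Fin n → Fin p) (c : Fin m → Fin p) :
    PeriodicLE a c ↔ ∀ t < m * (2 * h), a (Fin.ofNat n t) ≤ antiperiodicExtension c t := by
  refine ⟨fun H t _ ↦ H t, fun H t ↦ ?_⟩
  have index_eq : Fin.ofNat n (t % (m * (2 * h))) = Fin.ofNat n t :=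
    Fin.ext (Nat.mod_mod_of_dvd t hn)
  simpa only [index_eq, antiperiodicExtension_mod] using
    H (t % (m * (2 * h))) (Nat.mod_lt t (NeZero.pos _))

theorem baseDigit_succ_mul_altRepunit_eq [NeZero m] {h t : ℕ} (c : Fin m → Fin p)
    (ht : t < m * (2 * h)) :
    baseDigit p ((finFunctionFinEquiv c + 1) * altRepunit (p ^ m) h) t =
      antiperiodicExtension c t := by
  rw [baseDigit_succ_mul_altRepunit (finFunctionFinEquiv c).2 ht,
    show t % m = (Fin.ofNat m t : ℕ) from rfl, baseDigit_finFunctionFinEquiv,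
    antiperiodicExtension]
  split_ifs
  · rw [Fin.val_rev]
  · rfl

theorem not_dvd_choose_iff_periodicLE [NeZero n] [NeZero m] {h K : ℕ} [NeZero h] (hp : p.Prime)
    (hK : n * K = m * (2 * h)) (a : Fin n → Fin p) (c : Fin m → Fin p) :
    ¬ p ∣ ((finFunctionFinEquiv c + 1) * altRepunit (p ^ m) h).choose
      (finFunctionFinEquiv a * repunit (p ^ n) K) ↔ PeriodicLE a c := by
  have hpow (k : ℕ) : 1 ≤ p ^ k := Nat.one_le_pow k p hp.pos
  have hc := (finFunctionFinEquiv c).2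
  have ha := (finFunctionFinEquiv a).2
  have upper_lt : (finFunctionFinEquiv c + 1) * altRepunit (p ^ m) h < p ^ (m * (2 * h)) := by
    refine (Nat.mul_le_mul_right _ (by omega)).trans_lt
      ((add_one_mul_altRepunit (hpow m) h).trans_lt ?_)
    rw [← pow_mul]
    exact Nat.sub_one_lt_of_lt (hpow _)
  have lower_lt : finFunctionFinEquiv a * repunit (p ^ n) K < p ^ (m * (2 * h)) := by
    refine (Nat.mul_le_mul_right _ (by omega)).trans_lt
      ((sub_one_mul_repunit (hpow n) K).trans_lt ?_)
    rw [← pow_mul, hK]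
    exact Nat.sub_one_lt_of_lt (hpow _)
  rw [not_dvd_choose_iff_baseDigit_le hp upper_lt lower_lt,
    periodicLE_iff_forall_lt (Dvd.intro K hK)]
  refine forall₂_congr fun t ht ↦ ?_
  rw [baseDigit_succ_mul_altRepunit_eq c ht, baseDigit_mul_repunit_pow ha (hK ▸ ht),
    show t % n = (Fin.ofNat n t : ℕ) from rfl, baseDigit_finFunctionFinEquiv, Fin.le_def]

end Domination

section Counting

open Classical in
/-- The set of pairs of digit tuples `(a, c)` with `PeriodicLE a c`, which encode the pairs `(i, j)`
with `i < p ^ n` and `0 < j ≤ p ^ m` to be counted. -/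
noncomputable def dominatedPairs (p n m : ℕ) [NeZero n] [NeZero m] :
    Finset ((Fin n → Fin p) × (Fin m → Fin p)) :=
  {x | PeriodicLE x.1 x.2}

variable {p m n h K : ℕ}

theorem mem_dominatedPairs [NeZero n] [NeZero m] {x : (Fin n → Fin p) × (Fin m → Fin p)} :
    x ∈ dominatedPairs p n m ↔ PeriodicLE x.1 x.2 := by
  simp [dominatedPairs]

theorem card_filter_not_dvd_choose_eq_card_dominatedPairs [NeZero n] [NeZero m] [NeZero h]
    (hp : p.Prime) (hK : n * K = m * (2 * h)) :
    #{ij ∈ range (p ^ n) ×ˢ range (p ^ m) |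
      ¬ p ∣ ((ij.2 + 1) * altRepunit (p ^ m) h).choose (ij.1 * repunit (p ^ n) K)} =
      #(dominatedPairs p n m) := by
  symm
  refine card_nbij (fun x ↦ (finFunctionFinEquiv x.1, finFunctionFinEquiv x.2)) ?_ ?_ ?_
  · intro x hx
    exact mem_filter.2 ⟨mem_product.2 ⟨mem_range.2 (finFunctionFinEquiv x.1).2,
      mem_range.2 (finFunctionFinEquiv x.2).2⟩,
      (not_dvd_choose_iff_periodicLE hp hK _ _).2 (mem_dominatedPairs.1 hx)⟩
  · intro x _ y _ hxy
    obtain ⟨fst_eq, snd_eq⟩ := Prod.ext_iff.1 hxy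
    exact Prod.ext (finFunctionFinEquiv.injective (Fin.ext fst_eq))
      (finFunctionFinEquiv.injective (Fin.ext snd_eq))
  · rintro ⟨i, j⟩ hij
    simp only [mem_coe, mem_filter, mem_product, mem_range] at hij
    obtain ⟨⟨hi, hj⟩, hdvd⟩ := hij
    obtain ⟨a, ha⟩ := finFunctionFinEquiv.surjective (⟨i, hi⟩ : Fin (p ^ n))
    obtain ⟨c, hc⟩ := finFunctionFinEquiv.surjective (⟨j, hj⟩ : Fin (p ^ m))
    refine ⟨(a, c), ?_, by simp only [ha, hc]⟩
    rw [mem_coe, mem_dominatedPairs, ← not_dvd_choose_iff_periodicLE hp hK]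
    simpa only [ha, hc]

theorem filter_le_and_not_dvd_choose_eq {p q A B α β : ℕ} (hq : 1 < q) (hα : A * α = q - 1)
    (hβ : B * β = q - 1) :
    {ij ∈ range q ×ˢ range q | ij.1 * α ≤ ij.2 * β ∧ ij.2 * β ≤ q - 1 ∧
        ¬ p ∣ (ij.2 * β).choose (ij.1 * α)} =
      {ij ∈ range (A + 1) ×ˢ range (B + 1) | ¬ p ∣ (ij.2 * β).choose (ij.1 * α)} := by
  have α_pos : 0 < α := Nat.pos_of_ne_zero (by rintro rfl; omega)
  have β_pos : 0 < β := Nat.pos_of_ne_zero (by rintro rfl; omega)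
  have A_le : A ≤ q - 1 := hα ▸ Nat.le_mul_of_pos_right A α_pos
  have B_le : B ≤ q - 1 := hβ ▸ Nat.le_mul_of_pos_right B β_pos
  have le_A_iff (i : ℕ) : i * α ≤ q - 1 ↔ i ≤ A := by rw [← hα, Nat.mul_le_mul_right_iff α_pos]
  have le_B_iff (j : ℕ) : j * β ≤ q - 1 ↔ j ≤ B := by rw [← hβ, Nat.mul_le_mul_right_iff β_pos]
  ext ⟨i, j⟩
  simp only [mem_filter, mem_product, mem_range, Nat.lt_succ_iff]
  constructor
  · rintro ⟨-, hij, hj, hdvd⟩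
    exact ⟨⟨(le_A_iff i).1 (hij.trans hj), (le_B_iff j).1 hj⟩, hdvd⟩
  · rintro ⟨⟨hi, hj⟩, hdvd⟩
    have hij : i * α ≤ j * β := by
      by_contra! hlt
      exact hdvd (by simp [Nat.choose_eq_zero_of_lt hlt])
    exact ⟨by omega, hij, (le_B_iff j).2 hj, hdvd⟩

theorem card_filter_not_dvd_choose_eq_add {p L A B α β : ℕ} (hp : p.Prime) (hL : L ≠ 0)
    (hα : A * α = p ^ L - 1) (hβ : (B + 1) * β = p ^ L - 1) :
    #{ij ∈ range (A + 1) ×ˢ range (B + 2) | ¬ p ∣ (ij.2 * β).choose (ij.1 * α)} =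
      #{ij ∈ range (A + 1) ×ˢ range B | ¬ p ∣ ((ij.2 + 1) * β).choose (ij.1 * α)} +
        (A + 1) + 1 := by
  have hq : 1 < p ^ L := Nat.one_lt_pow hL hp.one_lt
  have α_pos : 0 < α := Nat.pos_of_ne_zero (by rintro rfl; omega)
  have bottom_row : #{i ∈ range (A + 1) | ¬ p ∣ (0 * β).choose (i * α)} = 1 := by
    refine card_eq_one.2 ⟨0, ?_⟩
    ext i
    rcases i.eq_zero_or_pos with rfl | hi
    · simp [hp.ne_one]
    · simp [Nat.choose_eq_zero_of_lt (Nat.mul_pos hi α_pos), hi.ne']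
  have top_row : #{i ∈ range (A + 1) | ¬ p ∣ ((B + 1) * β).choose (i * α)} = A + 1 := by
    rw [filter_true_of_mem, card_range]
    intro i hi
    have : i * α ≤ p ^ L - 1 := hα ▸ Nat.mul_le_mul_right α (mem_range_succ_iff.1 hi)
    exact hβ ▸ not_dvd_choose_pow_sub_one hp (by omega)
  rw [card_filter, sum_product_right, sum_range_succ, sum_range_succ', card_filter,
    sum_product_right, ← card_filter, ← card_filter, bottom_row, top_row]
  ring

end Counting

section Interleaving

variable {N M d : ℕ}

/-- Splits a tuple of length `N * d` into `d` tuples of length `N` according to the residue class of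
the index modulo `d`: the entry `k` of the tuple `r` is the entry `r + d * k` of the original. -/
def deinterleave (α : Type*) (N d : ℕ) : (Fin (N * d) → α) ≃ (Fin d → Fin N → α) :=
  ((Equiv.prodComm _ _).trans finProdFinEquiv).symm.arrowCongr (Equiv.refl α) |>.trans
    (Equiv.curry _ _ _)

theorem apply_ofNat_eq_deinterleave {α : Type*} [NeZero N] [NeZero d] (a : Fin (N * d) → α)
    (r : Fin d) (k : ℕ) :
    a (Fin.ofNat (N * d) (r + d * k)) = deinterleave α N d a r (Fin.ofNat N k) := by
  refine congrArg a (Fin.ext ?_)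
  change (r + d * k) % (N * d) = r + d * (k % N)
  rw [mul_comm N d, Nat.mod_mul, Nat.add_mul_mod_self_left, Nat.mod_eq_of_lt r.2,
    Nat.add_mul_div_left _ _ (NeZero.pos d), Nat.div_eq_of_lt r.2, zero_add]

theorem antiperiodicExtension_eq_deinterleave {p : ℕ} [NeZero M] [NeZero d]
    (c : Fin (M * d) → Fin p) (r : Fin d) (k : ℕ) :
    antiperiodicExtension c (r + d * k) =
      antiperiodicExtension (deinterleave (Fin p) M d c r) k := by
  have block_eq : (r + d * k) / (M * d) = k / M := by
    rw [mul_comm M d, ← Nat.div_div_eq_div_mul, Nat.add_mul_div_left _ _ (NeZero.pos d),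
      Nat.div_eq_of_lt r.2, zero_add]
  rw [antiperiodicExtension, antiperiodicExtension, apply_ofNat_eq_deinterleave c r k, block_eq]

theorem periodicLE_iff_forall_deinterleave {p : ℕ} [NeZero N] [NeZero M] [NeZero d]
    (a : Fin (N * d) → Fin p) (c : Fin (M * d) → Fin p) :
    PeriodicLE a c ↔
      ∀ r, PeriodicLE (deinterleave (Fin p) N d a r) (deinterleave (Fin p) M d c r) := by
  simp only [PeriodicLE, ← apply_ofNat_eq_deinterleave, ← antiperiodicExtension_eq_deinterleave]
  refine ⟨fun H r k ↦ H _, fun H t ↦ ?_⟩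
  simpa only [Fin.val_ofNat, Nat.mod_add_div] using H (Fin.ofNat d t) (t / d)

theorem card_dominatedPairs_mul (p N M d : ℕ) [NeZero N] [NeZero M] [NeZero d] :
    #(dominatedPairs p (N * d) (M * d)) = #(dominatedPairs p N M) ^ d := by
  rw [← Fintype.card_piFinset_const]
  refine card_equiv (((deinterleave (Fin p) N d).prodCongr (deinterleave (Fin p) M d)).trans
    (Equiv.arrowProdEquivProdArrow (Fin d) (fun _ ↦ Fin N → Fin p) (fun _ ↦ Fin M → Fin p)).symm)
    fun x ↦ ?_
  simp only [mem_dominatedPairs, Fintype.mem_piFinset, periodicLE_iff_forall_deinterleave]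
  rfl

end Interleaving

section Coprime

variable {p M h : ℕ}

/-- The tuple `c` with its entries at odd indices replaced by their complements `p - 1 - c l`. For
odd `M` this turns the antiperiodic extension, whose alternation depends on the parity of `t / M`,
into one that depends on the parity of `t`. -/
def reflectOdd (c : Fin M → Fin p) : Fin M → Fin p :=
  fun l ↦ if Even (l : ℕ) then c l else (c l).rev

theorem reflectOdd_involutive : Function.Involutive (reflectOdd : (Fin M → Fin p) → _) := by
  intro c
  funext l
  by_cases hl : Even (l : ℕ) <;> simp [reflectOdd, hl]

theorem antiperiodicExtension_eq_reflectOdd [NeZero M] (hM : Odd M) (c : Fin M → Fin p) (t : ℕ) :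
    antiperiodicExtension c t =
      if Even t then (reflectOdd c (Fin.ofNat M t)).rev else reflectOdd c (Fin.ofNat M t) := by
  have parity : Even t ↔ (Even (t / M) ↔ Even (t % M)) := by
    conv_lhs => rw [← Nat.div_add_mod t M]
    simp [Nat.even_add, Nat.even_mul, Nat.not_even_iff_odd.2 hM]
  by_cases hdiv : Even (t / M) <;> by_cases hmod : Even (t % M) <;>
    simp [antiperiodicExtension, reflectOdd, parity, hdiv, hmod]

theorem exists_ofNat_eq_of_coprime {n m : ℕ} [NeZero n] [NeZero m] (hnm : n.Coprime m)
    (u : Fin n) (l : Fin m) : ∃ t, Fin.ofNat n t = u ∧ Fin.ofNat m t = l := by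
  obtain ⟨t, ht_n, ht_m⟩ := Nat.chineseRemainder hnm u l
  exact ⟨t, Fin.ext (Eq.trans ht_n (Nat.mod_eq_of_lt u.2)),
    Fin.ext (Eq.trans ht_m (Nat.mod_eq_of_lt l.2))⟩

theorem periodicLE_iff_of_coprime [NeZero h] [NeZero M] (hc : (2 * h).Coprime M)
    (a : Fin (2 * h) → Fin p) (c : Fin M → Fin p) :
    PeriodicLE a c ↔
      ∀ u l, a u ≤ if Even (u : ℕ) then (reflectOdd c l).rev else reflectOdd c l := by
  have hM : Odd M := Nat.coprime_two_left.1 hc.coprime_mul_right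
  have even_ofNat (t : ℕ) : Even (Fin.ofNat (2 * h) t : ℕ) ↔ Even t := by
    simp only [Fin.val_ofNat, Nat.even_iff, Nat.mod_mul_right_mod]
  constructor
  · intro H u l
    obtain ⟨t, rfl, rfl⟩ := exists_ofNat_eq_of_coprime hc u l
    simpa only [even_ofNat, antiperiodicExtension_eq_reflectOdd hM] using H t
  · intro H t
    simpa only [even_ofNat, antiperiodicExtension_eq_reflectOdd hM] using
      H (Fin.ofNat (2 * h) t) (Fin.ofNat M t)

end Coprime

section Extrema

theorem card_filter_forall_mem {ι α : Type*} [Fintype ι] [DecidableEq ι] [Fintype α]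
    [DecidableEq α] (s : Finset α) :
    #{c : ι → α | ∀ l, c l ∈ s} = #s ^ Fintype.card ι := by
  have eq_piFinset : ({c | ∀ l, c l ∈ s} : Finset (ι → α)) = Fintype.piFinset fun _ ↦ s := by
    ext c
    simp
  rw [eq_piFinset, Fintype.card_piFinset, prod_const, card_univ]

variable {ι : Type*} [Fintype ι] [Nonempty ι]

theorem univ_inf'_le_univ_sup' {α : Type*} [Lattice α] (c : ι → α) :
    univ.inf' univ_nonempty c ≤ univ.sup' univ_nonempty c :=
  (inf'_le c (mem_univ (Classical.arbitrary ι))).trans (le_sup' c (mem_univ _))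

theorem card_filter_forall_le {p : ℕ} (c : ι → Fin p) :
    #{x | ∀ l, x ≤ c l} = (univ.inf' univ_nonempty c).val + 1 := by
  rw [← Fin.card_Iic]
  congr 1
  ext x
  simp

theorem card_filter_forall_le_rev {p : ℕ} (c : ι → Fin p) :
    #{x | ∀ l, x ≤ (c l).rev} = p - (univ.sup' univ_nonempty c).val := by
  have eq_Iic : ({x | ∀ l, x ≤ (c l).rev} : Finset _) = Iic (univ.sup' univ_nonempty c).rev := by
    ext x
    simp [Fin.le_rev_iff (i := x)]
  rw [eq_Iic, Fin.card_Iic, Fin.val_rev]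
  omega

theorem prod_ite_even {R : Type*} [CommMonoid R] (x y : R) (h : ℕ) :
    ∏ u : Fin (2 * h), (if Even (u : ℕ) then x else y) = (x * y) ^ h := by
  rw [Fin.prod_univ_eq_prod_range (fun u ↦ if Even u then x else y)]
  induction h with
  | zero => simp
  | succ h ih => simp [mul_add, prod_range_succ, ih, pow_succ, mul_assoc]

theorem card_filter_forall_le_alternating {p : ℕ} (h : ℕ) (c : ι → Fin p) :
    #{a : Fin (2 * h) → Fin p | ∀ u l, a u ≤ if Even (u : ℕ) then (c l).rev else c l} =
      ((p - (univ.sup' univ_nonempty c).val) * ((univ.inf' univ_nonempty c).val + 1)) ^ h := by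
  have eq_piFinset :
      ({a | ∀ u l, a u ≤ if Even (u : ℕ) then (c l).rev else c l} :
          Finset (Fin (2 * h) → Fin p)) =
        Fintype.piFinset fun u : Fin (2 * h) ↦
          {x | ∀ l, x ≤ if Even (u : ℕ) then (c l).rev else c l} := by
    ext a
    simp
  rw [eq_piFinset, Fintype.card_piFinset, ← prod_ite_even]
  refine prod_congr rfl fun u _ ↦ ?_
  split_ifs with hu
  · exact card_filter_forall_le_rev c
  · exact card_filter_forall_le c

theorem card_dominatedPairs_of_coprime {p M h : ℕ} [NeZero h] [NeZero M]
    (hc : (2 * h).Coprime M) :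
    #(dominatedPairs p (2 * h) M) = ∑ c : Fin M → Fin p,
      ((p - (univ.sup' univ_nonempty c).val) * ((univ.inf' univ_nonempty c).val + 1)) ^ h := by
  calc #(dominatedPairs p (2 * h) M)
      = #{x : (Fin (2 * h) → Fin p) × (Fin M → Fin p) |
          ∀ u l, x.1 u ≤ if Even (u : ℕ) then (x.2 l).rev else x.2 l} := by
        refine card_equiv ((Equiv.refl _).prodCongr
          (Function.Involutive.toPerm reflectOdd reflectOdd_involutive)) fun x ↦ ?_
        simp [mem_dominatedPairs, periodicLE_iff_of_coprime hc]
    _ = ∑ c : Fin M → Fin p, #{a : Fin (2 * h) → Fin p |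
          ∀ u l, a u ≤ if Even (u : ℕ) then (c l).rev else c l} := by
        simp only [card_filter, ← univ_product_univ, sum_product_right]
    _ = _ := sum_congr rfl fun c _ ↦ by convert card_filter_forall_le_alternating h c

variable {α : Type*} [DecidableEq ι] [Fintype α]

theorem card_filter_inf'_eq_sup'_eq [LinearOrder α] [LocallyFiniteOrder α] (s t : α) :
    (#{c : ι → α | univ.inf' univ_nonempty c = s ∧ univ.sup' univ_nonempty c = t} : ℤ) =
      #(Icc s t) ^ Fintype.card ι - #(Ioc s t) ^ Fintype.card ι - #(Ico s t) ^ Fintype.card ι +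
        #(Ioo s t) ^ Fintype.card ι := by
  -- Expand the product of indicators `([s ≤ x] - [s < x]) * ([y ≤ t] - [y < t])`.
  have indicator_eq (x y : α) : (if x = s ∧ y = t then 1 else 0 : ℤ) =
      (if s ≤ x ∧ y ≤ t then 1 else 0) - (if s < x ∧ y ≤ t then 1 else 0) -
        (if s ≤ x ∧ y < t then 1 else 0) + (if s < x ∧ y < t then 1 else 0) := by
    rcases lt_trichotomy s x with hx | rfl | hx <;> rcases lt_trichotomy y t with hy | rfl | hy <;>
      simp [*, le_of_lt, ne_of_gt, ne_of_lt, not_le_of_gt, not_lt_of_gt]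
  simp only [← Nat.cast_pow, ← card_filter_forall_mem, mem_Icc, mem_Ioc, mem_Ico, mem_Ioo,
    forall_and, card_filter, Nat.cast_sum, Nat.cast_ite, Nat.cast_one, Nat.cast_zero,
    ← sum_sub_distrib, ← sum_add_distrib]
  refine sum_congr rfl fun c _ ↦ (indicator_eq _ _).trans ?_
  simp only [le_inf'_iff, lt_inf'_iff, sup'_le_iff, sup'_lt_iff, mem_univ, true_imp_iff]

-- At `j = 0` the truncated `j - 1` is intended: constant tuples are counted as `1 - 0 + 0 = 1`.
theorem card_filter_sup'_eq_and_sup'_sub_inf'_eq {p i j : ℕ} (hi : i < p) (hj : j ≤ i) :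
    (#{c : ι → Fin p | (univ.sup' univ_nonempty c).val = i ∧
        (univ.sup' univ_nonempty c).val - (univ.inf' univ_nonempty c).val = j} : ℤ) =
      (j + 1) ^ Fintype.card ι - 2 * j ^ Fintype.card ι + ((j - 1 : ℕ) : ℤ) ^ Fintype.card ι := by
  have inclusion_exclusion :=
    card_filter_inf'_eq_sup'_eq (ι := ι) (⟨i - j, by omega⟩ : Fin p) ⟨i, hi⟩
  simp only [Fin.card_Icc, Fin.card_Ioc, Fin.card_Ico, Fin.card_Ioo, Fin.ext_iff]
    at inclusion_exclusion
  rw [show i + 1 - (i - j) = j + 1 by omega, Nat.sub_sub_self hj] at inclusion_exclusion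
  push_cast at inclusion_exclusion
  rw [two_mul, ← sub_sub, ← inclusion_exclusion]
  congr 2
  ext c
  have := Fin.le_def.1 (univ_inf'_le_univ_sup' c)
  grind

theorem sum_sup'_inf'_eq_sum_range (p : ℕ) (F : ℤ → ℤ → ℤ) :
    ∑ c : ι → Fin p, F (univ.sup' univ_nonempty c).val (univ.inf' univ_nonempty c).val =
      ∑ i ∈ range p, ∑ j ∈ range (i + 1), (((j : ℤ) + 1) ^ Fintype.card ι -
        2 * (j : ℤ) ^ Fintype.card ι + ((j - 1 : ℕ) : ℤ) ^ Fintype.card ι) * F i (i - j) := by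
  rw [sum_sigma', ← sum_fiberwise_of_maps_to (s := univ)
    (t := (range p).sigma fun i ↦ range (i + 1))
    (g := fun c : ι → Fin p ↦ (⟨(univ.sup' univ_nonempty c).val,
      (univ.sup' univ_nonempty c).val - (univ.inf' univ_nonempty c).val⟩ : Σ _ : ℕ, ℕ))]
  · refine sum_congr rfl fun ⟨i, j⟩ hij ↦ ?_
    simp only [mem_sigma, mem_range, Nat.lt_succ_iff] at hij
    rw [← card_filter_sup'_eq_and_sup'_sub_inf'_eq hij.1 hij.2, ← nsmul_eq_mul]
    simp only [Sigma.mk.injEq, heq_eq_eq]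
    refine sum_eq_card_nsmul fun c hc ↦ ?_
    obtain ⟨-, rfl, rfl⟩ := mem_filter.1 hc
    rw [Nat.cast_sub (univ_inf'_le_univ_sup' c), sub_sub_cancel]
  · simp

theorem sum_sup'_inf' (p : ℕ) (F : ℤ → ℤ → ℤ) :
    ∑ c : ι → Fin p, F (univ.sup' univ_nonempty c).val (univ.inf' univ_nonempty c).val =
      ∑ i ∈ range p, F i i + ∑ i ∈ Icc 1 (p - 1), ∑ j ∈ Icc 1 i,
        (((j : ℤ) + 1) ^ Fintype.card ι - 2 * (j : ℤ) ^ Fintype.card ι +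
          ((j : ℤ) - 1) ^ Fintype.card ι) * F i (i - j) := by
  have range_succ_eq (i : ℕ) : range (i + 1) = insert 0 (Icc 1 i) := by
    ext j
    simp only [mem_range, mem_insert, mem_Icc]
    omega
  have Icc_subset_range : Icc 1 (p - 1) ⊆ range p := fun i hi ↦ by
    rw [mem_Icc] at hi
    exact mem_range.2 (by omega)
  rw [sum_sup'_inf'_eq_sum_range, sum_subset Icc_subset_range, ← sum_add_distrib]
  · refine sum_congr rfl fun i _ ↦ ?_
    rw [range_succ_eq, sum_insert (by simp)]
    congr 1
    · simp
    · refine sum_congr rfl fun j hj ↦ ?_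
      rw [Nat.cast_sub (mem_Icc.1 hj).1, Nat.cast_one]
  · intro i hi hi'
    rw [mem_range] at hi
    rw [mem_Icc] at hi'
    rw [Icc_eq_empty (by omega), sum_empty]

end Extrema

theorem card_dominatedPairs_of_coprime_eq_sum {p M h : ℕ} [NeZero h] [NeZero M]
    (hc : (2 * h).Coprime M) :
    (#(dominatedPairs p (2 * h) M) : ℤ) =
      ∑ i ∈ range p, (((p : ℤ) - i) * (i + 1)) ^ h + ∑ i ∈ Icc 1 (p - 1), ∑ j ∈ Icc 1 i,
        (((j : ℤ) + 1) ^ M - 2 * (j : ℤ) ^ M + ((j : ℤ) - 1) ^ M) *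
          (((p : ℤ) - i) * (i - j + 1)) ^ h := by
  have sum_eq := sum_sup'_inf' (ι := Fin M) p fun x y ↦ ((p - x) * (y + 1)) ^ h
  rw [Fintype.card_fin] at sum_eq
  rw [card_dominatedPairs_of_coprime hc, ← sum_eq]
  push_cast
  refine sum_congr rfl fun c _ ↦ ?_
  rw [Nat.cast_sub (univ.sup' univ_nonempty c).is_le']

theorem card_filter_le_and_not_dvd_choose {p m n h K q α β : ℕ} [NeZero n] [NeZero m] [NeZero h]
    (hp : p.Prime) (hK : n * K = m * (2 * h)) (hq : q = p ^ (n * K))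
    (hα : α = (q - 1) / (p ^ n - 1)) (hβ : β = (q - 1) / (p ^ m + 1)) :
    #{ij ∈ range q ×ˢ range q | ij.1 * α ≤ ij.2 * β ∧ ij.2 * β ≤ q - 1 ∧
      ¬ p ∣ (ij.2 * β).choose (ij.1 * α)} = #(dominatedPairs p n m) + p ^ n + 1 := by
  have one_le_pow (k : ℕ) : 1 ≤ p ^ k := Nat.one_le_pow k p hp.pos
  have one_lt_pow : 1 < p ^ n := Nat.one_lt_pow (NeZero.ne n) hp.one_lt
  have mul_repunit : (p ^ n - 1) * repunit (p ^ n) K = q - 1 := by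
    rw [sub_one_mul_repunit (one_le_pow n), hq, pow_mul]
  have mul_altRepunit : (p ^ m + 1) * altRepunit (p ^ m) h = q - 1 := by
    rw [add_one_mul_altRepunit (one_le_pow m), hq, hK, ← pow_mul]
  obtain rfl : α = repunit (p ^ n) K :=
    hα.trans (Nat.div_eq_of_eq_mul_right (by omega) mul_repunit.symm)
  obtain rfl : β = altRepunit (p ^ m) h :=
    hβ.trans (Nat.div_eq_of_eq_mul_right (by omega) mul_altRepunit.symm)
  have exponent_ne_zero : n * K ≠ 0 := hK ▸ NeZero.ne _
  have one_lt_q : 1 < q := hq ▸ Nat.one_lt_pow exponent_ne_zero hp.one_lt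
  rw [filter_le_and_not_dvd_choose_eq one_lt_q mul_repunit mul_altRepunit,
    card_filter_not_dvd_choose_eq_add hp exponent_ne_zero (hq ▸ mul_repunit) (hq ▸ mul_altRepunit),
    Nat.sub_add_cancel (one_le_pow n), card_filter_not_dvd_choose_eq_card_dominatedPairs hp hK]

end

/-- Theorem 4.8 (i), counting part, `n/d` even: with `d = gcd(m,n)`, `q = p^(mn/d)`,
`α = (q−1)/(pⁿ−1)`, `β = (q−1)/(pᵐ+1)`, the number of pairs `(i, j)` with
`iα ≤ jβ ≤ q−1` and `p ∤ C(jβ, iα)` equals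
`(Σ_{i=0}^{p−1} ((p−i)(i+1))^(n/2d) + Σ_{1≤j≤i≤p−1} ((j+1)^(m/d) − 2j^(m/d) + (j−1)^(m/d))
   ((p−i)(i−j+1))^(n/2d))^d + pⁿ + 1`. -/
theorem stmt_16 (p m n : ℕ) (hp : p.Prime) (hm : 0 < m) (hn : 0 < n)
    (d q α β : ℕ) (hd : d = Nat.gcd m n) (heven : Even (n / d))
    (hq : q = p ^ (m * n / d))
    (hα : α = (q - 1) / (p ^ n - 1)) (hβ : β = (q - 1) / (p ^ m + 1)) :
    (((Finset.range q ×ˢ Finset.range q).filter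
      (fun ij : ℕ × ℕ => ij.1 * α ≤ ij.2 * β ∧ ij.2 * β ≤ q - 1 ∧
        ¬ p ∣ Nat.choose (ij.2 * β) (ij.1 * α))).card : ℤ)
    = (∑ i ∈ Finset.range p, (((p : ℤ) - (i : ℤ)) * ((i : ℤ) + 1)) ^ (n / (2 * d))
        + ∑ i ∈ Finset.Icc 1 (p - 1), ∑ j ∈ Finset.Icc 1 i,
            (((j : ℤ) + 1) ^ (m / d) - 2 * (j : ℤ) ^ (m / d) + ((j : ℤ) - 1) ^ (m / d))
              * (((p : ℤ) - (i : ℤ)) * ((i : ℤ) - (j : ℤ) + 1)) ^ (n / (2 * d))) ^ d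
      + (p : ℤ) ^ n + 1 := by
  obtain ⟨M, N, hc, hmM, hnN⟩ := Nat.exists_coprime m n
  rw [← hd] at hmM hnN
  subst hmM hnN
  have : NeZero M := ⟨left_ne_zero_of_mul hm.ne'⟩
  have : NeZero d := ⟨right_ne_zero_of_mul hm.ne'⟩
  rw [Nat.mul_div_cancel _ (NeZero.pos d)] at heven
  obtain ⟨h, rfl⟩ := even_iff_exists_two_mul.1 heven
  have : NeZero h := ⟨by rintro rfl; simp at hn⟩
  have exponent_eq : M * d * (2 * h * d) / d = 2 * h * d * M :=
    Nat.div_eq_of_eq_mul_left (NeZero.pos d) (by ring)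
  have half_eq : 2 * h * d / (2 * d) = h :=
    Nat.div_eq_of_eq_mul_left (NeZero.pos _) (by ring)
  rw [card_filter_le_and_not_dvd_choose hp (by ring) (exponent_eq ▸ hq) hα hβ,
    card_dominatedPairs_mul, half_eq, Nat.mul_div_cancel _ (NeZero.pos d)]
  push_cast
  rw [card_dominatedPairs_of_coprime_eq_sum hc.symm]
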